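/- Let A ⊆ B be an aperiodic C*-inclusion. Then A ⊆ B has the generalised intersection property: there is a closed two-sided ideal N of B such that for every closed two-sided ideal J of B one has J ∩ A = {0} if and only if J ⊆ N. Moreover, this hidden ideal N is the largest ideal of B that is aperiodic as an A-bimodule: J ⊆ N holds if and only if every x ∈ J satisfies Kishimoto's condition (for every hereditary C*-subalgebra D of A and ε > 0 there is a positive a ∈ D with ‖a‖ = 1 and ‖a x a‖ < ε). -/

import Mathlib

/-- A closed (ring-theoretic) two-sided ideal of `B`. -/
def IsClosedTwoSidedIdeal {B : Type*} [NonUnitalCStarAlgebra B] (S : Set B) : Prop :=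
  IsClosed S ∧ (0 : B) ∈ S ∧ (∀ x ∈ S, ∀ y ∈ S, x + y ∈ S) ∧ (∀ x ∈ S, -x ∈ S) ∧
    (∀ b : B, ∀ x ∈ S, b * x ∈ S) ∧ ∀ b : B, ∀ x ∈ S, x * b ∈ S

/-- A closed *-subalgebra of `B`. -/
def IsCStarSubalgebra {B : Type*} [NonUnitalCStarAlgebra B] (A : Set B) : Prop :=
  IsClosed A ∧ (0 : B) ∈ A ∧ (∀ x ∈ A, ∀ y ∈ A, x + y ∈ A) ∧
    (∀ (c : ℂ), ∀ x ∈ A, c • x ∈ A) ∧ (∀ x ∈ A, ∀ y ∈ A, x * y ∈ A) ∧ ∀ x ∈ A, star x ∈ A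

/-- A hereditary C*-subalgebra `D` of the subalgebra `A ⊆ B`: a nonzero closed
*-subalgebra of `A` such that `a ∈ D`, `b ∈ A`, `0 ≤ b ≤ a` imply `b ∈ D`. -/
def IsHereditarySubalgebraIn {B : Type*} [NonUnitalCStarAlgebra B] [PartialOrder B]
    [StarOrderedRing B] (A D : Set B) : Prop :=
  D ⊆ A ∧ IsClosed D ∧ (∃ x ∈ D, x ≠ 0) ∧ (0 : B) ∈ D ∧
    (∀ x ∈ D, ∀ y ∈ D, x + y ∈ D) ∧ (∀ (c : ℂ), ∀ x ∈ D, c • x ∈ D) ∧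
    (∀ x ∈ D, ∀ y ∈ D, x * y ∈ D) ∧ (∀ x ∈ D, star x ∈ D) ∧
    ∀ a ∈ D, ∀ b ∈ A, 0 ≤ b → b ≤ a → b ∈ D

/-- The C*-inclusion `A ⊆ B` is aperiodic: every element of `B` satisfies Kishimoto's
condition modulo `A`. -/
def IsAperiodicInclusion {B : Type*} [NonUnitalCStarAlgebra B] [PartialOrder B]
    [StarOrderedRing B] (A : Set B) : Prop :=
  ∀ x : B, ∀ D : Set B, IsHereditarySubalgebraIn A D → ∀ ε : ℝ, 0 < ε →
    ∃ a ∈ D, 0 ≤ a ∧ ‖a‖ = 1 ∧ ∃ y ∈ A, ‖a * x * a - y‖ < ε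

/-- Kishimoto's condition for an element `x` of `B`, relative to the subalgebra `A`. -/
def KishimotoCondition {B : Type*} [NonUnitalCStarAlgebra B] [PartialOrder B]
    [StarOrderedRing B] (A : Set B) (x : B) : Prop :=
  ∀ D : Set B, IsHereditarySubalgebraIn A D → ∀ ε : ℝ, 0 < ε →
    ∃ a ∈ D, 0 ≤ a ∧ ‖a‖ = 1 ∧ ‖a * x * a‖ < ε

section

variable {B : Type*} [NonUnitalCStarAlgebra B]

lemma IsCStarSubalgebra.cfcₙ_mem {A : Set B} (hA : IsCStarSubalgebra A) {a : B} (ha : a ∈ A)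
    (f : ℝ → ℝ) : cfcₙ f a ∈ A := by
  obtain ⟨hcl, h0, hadd, hsmul, hmul, hstar⟩ := hA
  let S : NonUnitalStarSubalgebra ℂ B :=
    { carrier := A
      zero_mem' := h0
      add_mem' := fun {x y} hx hy => hadd x hx y hy
      smul_mem' := fun c {x} hx => hsmul c x hx
      mul_mem' := fun {x y} hx hy => hmul x hx y hy
      star_mem' := fun {x} hx => hstar x hx }
  have : IsClosed (S : Set B) := hcl
  have haS : a ∈ S := ha
  exact _root_.cfcₙ_mem (s := S) f haS

variable [PartialOrder B] [StarOrderedRing B]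

/-- The cut-down `(c - s)₊` of a positive element is nonzero when `s < ‖c‖`. -/
lemma cfcₙ_max_sub_ne_zero {c : B} (hc : 0 ≤ c) {s : ℝ} (hs : 0 ≤ s) (hsc : s < ‖c‖) :
    cfcₙ (fun t : ℝ => max (t - s) 0) c ≠ 0 := by
  obtain ⟨x, hx, hxc⟩ :=
    (NonUnitalIsometricContinuousFunctionalCalculus.isGreatest_norm_quasispectrum (𝕜 := ℝ) c).1
  have hx0 : 0 ≤ x := quasispectrum_nonneg_of_nonneg c hc x hx
  have hxc' : x = ‖c‖ := by
    simpa [abs_of_nonneg hx0] using hxc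
  intro h
  have := norm_apply_le_norm_cfcₙ (fun t : ℝ => max (t - s) 0) c hx (by fun_prop) (by simp [hs])
  rw [h, norm_zero, Real.norm_eq_abs] at this
  have h2 := (le_abs_self _).trans this
  have h3 := le_max_left (x - s) 0
  linarith

/-- If a positive element `c` is congruent to an element of norm less than `‖c‖` modulo a closed
ideal `J`, then some cut-down of `c` is a nonzero element of `J`. -/
lemma IsClosedTwoSidedIdeal.exists_cfcₙ_mem {J : Set B} (hJ : IsClosedTwoSidedIdeal J) {c r : B}
    (hc : 0 ≤ c) (hcr : c - r ∈ J) (hr : ‖r‖ < ‖c‖) :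
    ∃ f : ℝ → ℝ, cfcₙ f c ∈ J ∧ cfcₙ f c ≠ 0 := by
  obtain ⟨hcl, h0, hadd, -, hleft, hright⟩ := hJ
  obtain ⟨s, hrs, hsc⟩ := exists_between hr
  have hs : 0 < s := (norm_nonneg r).trans_lt hrs
  refine ⟨fun t => max (t - s) 0, ?_, cfcₙ_max_sub_ne_zero hc hs.le hsc⟩
  let g : ℕ → ℝ → ℝ := fun n t => max (t - s) 0 * (max t s)⁻¹ ^ n
  have hgcont (n : ℕ) : Continuous (g n) := by
    have hne : ∀ t : ℝ, max t s ≠ 0 := fun t => (hs.trans_le (le_max_right t s)).ne'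
    have : Continuous fun t : ℝ => (max t s)⁻¹ := Continuous.inv₀ (by fun_prop) hne
    fun_prop
  have hg0 (n : ℕ) : g n 0 = 0 := by simp [g, hs.le]
  let v : ℕ → B := fun n => cfcₙ (g n) c
  have hv (n : ℕ) : v n = c * v (n + 1) := by
    have h := cfcₙ_mul (fun t : ℝ => t) (g (n + 1)) c (by fun_prop) rfl
      (hgcont (n + 1)).continuousOn (hg0 _)
    rw [cfcₙ_id' ℝ c] at h
    rw [← h]
    change cfcₙ (g n) c = _
    congr 1
    funext t
    by_cases ht : t ≤ s
    · simp [g, ht]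
    · push Not at ht
      have htne : t ≠ 0 := (hs.trans ht).ne'
      simp only [g, max_eq_left ht.le, inv_pow]
      field_simp
      ring
  have hbound (n : ℕ) : ‖v n‖ ≤ ‖c‖ * s⁻¹ ^ n := by
    refine norm_cfcₙ_le fun t ht => ?_
    have htc : ‖t‖ ≤ ‖c‖ :=
      NonUnitalIsometricContinuousFunctionalCalculus.norm_quasispectrum_le c ht
    have htc' : t ≤ ‖c‖ := (le_abs_self t).trans htc
    have hmax : 0 < max t s := hs.trans_le (le_max_right t s)
    rw [Real.norm_of_nonneg (by positivity)]
    simp only [g]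
    gcongr
    · exact max_le (by linarith) (norm_nonneg c)
    · exact le_max_right t s
  have happrox (n : ℕ) : ∀ m, ∃ j ∈ J, ‖v m - j‖ ≤ ‖r‖ ^ n * ‖v (m + n)‖ := by
    induction n with
    | zero => exact fun m => ⟨0, h0, by simp⟩
    | succ n ih =>
      intro m
      obtain ⟨j, hj, hjn⟩ := ih (m + 1)
      refine ⟨(c - r) * v (m + 1) + r * j,
        hadd _ (hright _ _ hcr) _ (hleft _ _ hj), ?_⟩
      have heq : v m - ((c - r) * v (m + 1) + r * j) = r * (v (m + 1) - j) := by
        rw [hv m]; noncomm_ring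
      rw [heq]
      calc ‖r * (v (m + 1) - j)‖ ≤ ‖r‖ * ‖v (m + 1) - j‖ := norm_mul_le _ _
        _ ≤ ‖r‖ * (‖r‖ ^ n * ‖v (m + 1 + n)‖) := by gcongr
        _ = ‖r‖ ^ (n + 1) * ‖v (m + (n + 1))‖ := by
          rw [show m + 1 + n = m + (n + 1) by ring]; ring
  have hv0 : cfcₙ (fun t : ℝ => max (t - s) 0) c = v 0 := by simp [v, g]
  rw [hv0, ← hcl.closure_eq, Metric.mem_closure_iff]
  intro ε hε
  have hlim : Filter.Tendsto (fun n : ℕ => ‖c‖ * (‖r‖ / s) ^ n) Filter.atTop (nhds 0) := by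
    simpa using (tendsto_pow_atTop_nhds_zero_of_lt_one (by positivity)
      ((div_lt_one hs).2 hrs)).const_mul ‖c‖
  obtain ⟨n, hn⟩ := (hlim.eventually (gt_mem_nhds hε)).exists
  obtain ⟨j, hj, hjn⟩ := happrox n 0
  refine ⟨j, hj, ?_⟩
  rw [dist_eq_norm]
  calc ‖v 0 - j‖ ≤ ‖r‖ ^ n * ‖v (0 + n)‖ := hjn
    _ ≤ ‖r‖ ^ n * (‖c‖ * s⁻¹ ^ n) := by rw [zero_add]; gcongr; exact hbound n
    _ = ‖c‖ * (‖r‖ / s) ^ n := by rw [div_eq_mul_inv, mul_pow]; ring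
    _ < ε := hn

/-- The quotient map by a closed ideal `J` with `J ∩ A = {0}` is isometric on `A`. -/
lemma IsClosedTwoSidedIdeal.norm_le_norm_sub {J A : Set B} (hJ : IsClosedTwoSidedIdeal J)
    (hA : IsCStarSubalgebra A) (hJA : J ∩ A = {0}) {y z : B} (hy : y ∈ A) (hz : z ∈ J) :
    ‖y‖ ≤ ‖z - y‖ := by
  by_contra! hlt
  have hypos : 0 < ‖y‖ := (norm_nonneg _).trans_lt hlt
  have hcr : star y * y - star y * (y - z) ∈ J := by
    rw [← mul_sub, sub_sub_cancel]
    exact hJ.2.2.2.2.1 _ _ hz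
  have hr : ‖star y * (y - z)‖ < ‖star y * y‖ := by
    rw [CStarRing.norm_star_mul_self]
    calc ‖star y * (y - z)‖ ≤ ‖star y‖ * ‖y - z‖ := norm_mul_le _ _
      _ = ‖y‖ * ‖z - y‖ := by rw [norm_star, norm_sub_rev]
      _ < ‖y‖ * ‖y‖ := by gcongr
  obtain ⟨f, hfJ, hf0⟩ := hJ.exists_cfcₙ_mem (star_mul_self_nonneg y) hcr hr
  have hfA : cfcₙ f (star y * y) ∈ A :=
    hA.cfcₙ_mem (hA.2.2.2.2.1 _ (hA.2.2.2.2.2 y hy) y hy) f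
  have hmem : cfcₙ f (star y * y) ∈ J ∩ A := ⟨hfJ, hfA⟩
  rw [hJA] at hmem
  exact hf0 hmem

/-- If `0 ≤ b ≤ d` and the self-adjoint element `y` is a right unit for `d`, then it is a right
unit for `b`. -/
lemma mul_eq_self_of_nonneg_of_le {b d y : B} (hy : star y = y) (hb : 0 ≤ b) (hbd : b ≤ d)
    (hd : d * y = d) : b * y = b := by
  obtain ⟨p, rfl⟩ := CStarAlgebra.nonneg_iff_eq_star_mul_self.1 hb
  obtain ⟨q, hq⟩ := CStarAlgebra.nonneg_iff_eq_star_mul_self.1 (sub_nonneg.2 hbd)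
  have hsum : star (p - p * y) * (p - p * y) + star (q - q * y) * (q - q * y) = 0 := by
    have hexp (z : B) : star (z - z * y) * (z - z * y)
        = (star z * z - star z * z * y) - y * (star z * z - star z * z * y) := by
      rw [star_sub, star_mul, hy]; noncomm_ring
    have hd' : d = star p * p + star q * q := by rw [← hq]; abel
    have hdd : (star p * p - star p * p * y) + (star q * q - star q * q * y) = 0 := by
      rw [hd', add_mul] at hd
      rw [← sub_eq_zero] at hd
      rw [← neg_eq_zero, ← hd]; abel
    rw [hexp, hexp, sub_add_sub_comm, ← mul_add, hdd, mul_zero, sub_zero]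
  have hp : star (p - p * y) * (p - p * y) = 0 :=
    ((add_eq_zero_iff_of_nonneg (star_mul_self_nonneg _) (star_mul_self_nonneg _)).1 hsum).1
  have hp' := (CStarRing.star_mul_self_eq_zero_iff _).1 hp
  rw [mul_assoc, ← sub_eq_zero.1 hp']

lemma IsHereditarySubalgebraIn.isCStarSubalgebra {A D : Set B}
    (hD : IsHereditarySubalgebraIn A D) : IsCStarSubalgebra D :=
  ⟨hD.2.1, hD.2.2.2.1, hD.2.2.2.2.1, hD.2.2.2.2.2.1, hD.2.2.2.2.2.2.1, hD.2.2.2.2.2.2.2.1⟩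

lemma IsCStarSubalgebra.isHereditarySubalgebraIn_self {A : Set B} (hA : IsCStarSubalgebra A)
    (hA0 : ∃ x ∈ A, x ≠ 0) : IsHereditarySubalgebraIn A A :=
  ⟨subset_rfl, hA.1, hA0, hA.2.1, hA.2.2.1, hA.2.2.2.1, hA.2.2.2.2.1, hA.2.2.2.2.2,
    fun _ _ _ hb _ _ => hb⟩

/-- Inside a hereditary subalgebra `D`, a positive element `a` of norm one gives rise to a smaller
hereditary subalgebra on which a multiple `a * h` of `a`, with `‖h‖ ≤ 2`, acts as a unit. -/
lemma IsHereditarySubalgebraIn.exists_unit {A D : Set B} (hD : IsHereditarySubalgebraIn A D)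
    {a : B} (ha : a ∈ D) (ha0 : 0 ≤ a) (ha1 : ‖a‖ = 1) :
    ∃ h : B, ‖h‖ ≤ 2 ∧ a * h = h * a ∧
      IsHereditarySubalgebraIn A {d ∈ D | a * h * d = d ∧ d * (a * h) = d} := by
  let u : ℝ → ℝ := fun t => min (2 * t) 1 * (max t (1 / 2))⁻¹
  have hu : Continuous u := by
    have hne : ∀ t : ℝ, max t (1 / 2) ≠ 0 := fun t =>
      ((by norm_num : (0 : ℝ) < 1 / 2).trans_le (le_max_right t _)).ne'
    have : Continuous fun t : ℝ => (max t (1 / 2))⁻¹ := Continuous.inv₀ (by fun_prop) hne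
    fun_prop
  have hu0 : u 0 = 0 := by simp [u]
  let h : B := cfcₙ u a
  have hah : a * h = cfcₙ (fun t : ℝ => t * u t) a := by
    rw [cfcₙ_mul (fun t : ℝ => t) u a (by fun_prop) rfl hu.continuousOn hu0, cfcₙ_id' ℝ a]
  have hcomm : a * h = h * a := by
    have := (cfcₙ_commute_cfcₙ (fun t : ℝ => t) u a).eq
    rwa [cfcₙ_id' ℝ a] at this
  have hsa : star (a * h) = a * h := by
    rw [hah]; exact (cfcₙ_predicate (R := ℝ) (p := IsSelfAdjoint) _ a).star_eq
  have hnorm : ‖h‖ ≤ 2 := by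
    refine norm_cfcₙ_le fun t ht => ?_
    have ht0 : 0 ≤ t := quasispectrum_nonneg_of_nonneg a ha0 t ht
    have hmax : (1 / 2 : ℝ) ≤ max t (1 / 2) := le_max_right _ _
    have hmin : 0 ≤ min (2 * t) 1 := le_min (by linarith) zero_le_one
    rw [Real.norm_of_nonneg (by positivity)]
    calc u t ≤ 1 * (1 / 2 : ℝ)⁻¹ := by
          simp only [u]
          gcongr
          exact min_le_right _ _
      _ = 2 := by norm_num
  refine ⟨h, hnorm, hcomm, ?_⟩
  let k : B := cfcₙ (fun t : ℝ => max (t - 1 / 2) 0) a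
  have hk0 : k ≠ 0 := cfcₙ_max_sub_ne_zero ha0 (by norm_num) (by rw [ha1]; norm_num)
  have hkD : k ∈ D := hD.isCStarSubalgebra.cfcₙ_mem ha _
  have hkmul : a * h * k = k := by
    rw [hah, ← cfcₙ_mul (fun t : ℝ => t * u t) (fun t : ℝ => max (t - 1 / 2) 0) a
      (continuous_id.mul hu).continuousOn (by simp) (by fun_prop) (by norm_num)]
    change cfcₙ _ a = cfcₙ _ a
    congr 1
    funext t
    by_cases ht : t ≤ 1 / 2
    · rw [max_eq_right (by linarith : t - 1 / 2 ≤ 0), mul_zero]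
    · push Not at ht
      have htne : t ≠ 0 := by linarith
      simp only [u]
      rw [min_eq_right (by linarith), max_eq_left ht.le, one_mul, mul_inv_cancel₀ htne, one_mul]
  have hkmul' : k * (a * h) = k := by
    rw [hah, (cfcₙ_commute_cfcₙ _ _ a).eq, ← hah]
    exact hkmul
  obtain ⟨hDA, hcl, -, h0, hadd, hsmul, hmul, hstar, hher⟩ := hD
  refine ⟨fun d hd => hDA hd.1, ?_, ⟨k, ⟨hkD, hkmul, hkmul'⟩, hk0⟩, ⟨h0, by simp⟩, ?_, ?_, ?_, ?_,
    ?_⟩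
  · exact hcl.inter ((isClosed_eq (by fun_prop) continuous_id).inter
      (isClosed_eq (by fun_prop) continuous_id))
  · rintro x ⟨hx, hx1, hx2⟩ y ⟨hy, hy1, hy2⟩
    exact ⟨hadd x hx y hy, by rw [mul_add, hx1, hy1], by rw [add_mul, hx2, hy2]⟩
  · rintro c x ⟨hx, hx1, hx2⟩
    exact ⟨hsmul c x hx, by rw [mul_smul_comm, hx1], by rw [smul_mul_assoc, hx2]⟩
  · rintro x ⟨hx, hx1, hx2⟩ y ⟨hy, hy1, hy2⟩
    exact ⟨hmul x hx y hy, by rw [← mul_assoc, hx1], by rw [mul_assoc, hy2]⟩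
  · rintro x ⟨hx, hx1, hx2⟩
    refine ⟨hstar x hx, ?_, ?_⟩
    · have := congrArg star hx2
      rwa [star_mul, hsa] at this
    · have := congrArg star hx1
      rwa [star_mul, hsa] at this
  · rintro d ⟨hd, -, hd2⟩ b hb hb0 hbd
    have hb2 := mul_eq_self_of_nonneg_of_le hsa hb0 hbd hd2
    refine ⟨hher d hd b hb hb0 hbd, ?_, hb2⟩
    have := congrArg star hb2
    rwa [star_mul, hsa, (IsSelfAdjoint.of_nonneg hb0).star_eq] at this

namespace KishimotoCondition

variable {A : Set B}

lemma neg {x : B} (hx : KishimotoCondition A x) : KishimotoCondition A (-x) := by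
  intro D hD ε hε
  obtain ⟨a, ha, ha0, ha1, hax⟩ := hx D hD ε hε
  exact ⟨a, ha, ha0, ha1, by simpa using hax⟩

lemma add {x y : B} (hx : KishimotoCondition A x) (hy : KishimotoCondition A y) :
    KishimotoCondition A (x + y) := by
  intro D hD ε hε
  obtain ⟨a, ha, ha0, ha1, hax⟩ := hx D hD (ε / 8) (by positivity)
  obtain ⟨h, hh, hcomm, hD'⟩ := hD.exists_unit ha ha0 ha1
  obtain ⟨b, ⟨hbD, hb1, hb2⟩, hb0, hbn, hby⟩ := hy _ hD' (ε / 2) (by positivity)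
  refine ⟨b, hbD, hb0, hbn, ?_⟩
  have hbx : b * x * b = b * h * (a * x * a) * (h * b) := by
    calc b * x * b = b * (a * h) * x * (a * h * b) := by rw [hb1, hb2]
      _ = b * (h * a) * x * (a * h * b) := by rw [hcomm]
      _ = _ := by simp only [mul_assoc]
  have hbh : ‖b * h‖ ≤ 2 := (norm_mul_le _ _).trans (by rw [hbn, one_mul]; exact hh)
  have hhb : ‖h * b‖ ≤ 2 := (norm_mul_le _ _).trans (by rw [hbn, mul_one]; exact hh)
  have hbx' : ‖b * x * b‖ ≤ ε / 2 := by
    rw [hbx]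
    calc ‖b * h * (a * x * a) * (h * b)‖ ≤ ‖b * h‖ * ‖a * x * a‖ * ‖h * b‖ :=
          norm_mul₃_le
      _ ≤ 2 * (ε / 8) * 2 := by gcongr
      _ = ε / 2 := by ring
  calc ‖b * (x + y) * b‖ = ‖b * x * b + b * y * b‖ := by rw [mul_add, add_mul]
    _ ≤ ‖b * x * b‖ + ‖b * y * b‖ := norm_add_le _ _
    _ < ε := by linarith

end KishimotoCondition

lemma isClosed_setOf_kishimotoCondition (A : Set B) : IsClosed {x | KishimotoCondition A x} := by
  refine isClosed_of_closure_subset fun x hx D hD ε hε => ?_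
  obtain ⟨y, hy, hxy⟩ := Metric.mem_closure_iff.1 hx (ε / 2) (by positivity)
  obtain ⟨a, ha, ha0, ha1, hay⟩ := hy D hD (ε / 2) (by positivity)
  refine ⟨a, ha, ha0, ha1, ?_⟩
  have hdiff : ‖a * (x - y) * a‖ ≤ ‖x - y‖ := by
    simpa [ha1] using norm_mul₃_le (a := a) (b := x - y) (c := a)
  rw [dist_eq_norm] at hxy
  calc ‖a * x * a‖ = ‖a * (x - y) * a + a * y * a‖ := by rw [mul_sub, sub_mul, sub_add_cancel]
    _ ≤ ‖a * (x - y) * a‖ + ‖a * y * a‖ := norm_add_le _ _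
    _ < ε := by linarith

/-- For an aperiodic inclusion, the closed ideals having zero intersection with `A` are those
consisting of elements satisfying Kishimoto's condition. -/
lemma IsAperiodicInclusion.inter_eq_zero_iff {A : Set B} (hap : IsAperiodicInclusion A)
    (hA : IsCStarSubalgebra A) (hA0 : ∃ x ∈ A, x ≠ 0) {J : Set B}
    (hJ : IsClosedTwoSidedIdeal J) :
    J ∩ A = {0} ↔ ∀ x ∈ J, KishimotoCondition A x := by
  constructor
  · intro hJA x hx D hD ε hε
    obtain ⟨a, ha, ha0, ha1, y, hy, hay⟩ := hap x D hD (ε / 2) (by positivity)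
    refine ⟨a, ha, ha0, ha1, ?_⟩
    have hxJ : a * x * a ∈ J := hJ.2.2.2.2.2 _ _ (hJ.2.2.2.2.1 _ _ hx)
    have hyn := hJ.norm_le_norm_sub hA hJA hy hxJ
    calc ‖a * x * a‖ = ‖(a * x * a - y) + y‖ := by rw [sub_add_cancel]
      _ ≤ ‖a * x * a - y‖ + ‖y‖ := norm_add_le _ _
      _ < ε := by linarith
  · intro hK
    refine Set.eq_singleton_iff_unique_mem.2 ⟨⟨hJ.2.1, hA.2.1⟩, fun x ⟨hxJ, hxA⟩ => ?_⟩
    by_contra hx0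
    have hxn : 0 < ‖x‖ := norm_pos_iff.2 hx0
    obtain ⟨a, haJ, haA, ha0, ha1⟩ : ∃ a, a ∈ J ∧ a ∈ A ∧ 0 ≤ a ∧ ‖a‖ = 1 := by
      let w : B := ((‖x‖⁻¹ : ℝ) : ℂ) • x
      have hwA : w ∈ A := hA.2.2.2.1 _ x hxA
      have hwn : ‖w‖ = 1 := by
        simp only [w, norm_smul, Complex.norm_real, norm_inv, norm_norm]
        exact inv_mul_cancel₀ hxn.ne'
      refine ⟨star w * w, ?_, hA.2.2.2.2.1 _ (hA.2.2.2.2.2 _ hwA) _ hwA,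
        star_mul_self_nonneg w, by rw [CStarRing.norm_star_mul_self, hwn, one_mul]⟩
      simp only [w]
      rw [mul_smul_comm, ← smul_mul_assoc]
      exact hJ.2.2.2.2.1 _ _ hxJ
    obtain ⟨h, -, -, hD⟩ := (hA.isHereditarySubalgebraIn_self hA0).exists_unit haA ha0 ha1
    obtain ⟨b, ⟨-, -, hb2⟩, hb0, hbn, hlt⟩ :=
      hK (a * h) (hJ.2.2.2.2.2 _ _ haJ) _ hD 1 one_pos
    rw [hb2] at hlt
    have hbb : ‖b * b‖ = 1 := by
      have := CStarRing.norm_star_mul_self (x := b)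
      rwa [(IsSelfAdjoint.of_nonneg hb0).star_eq, hbn, one_mul] at this
    linarith

end

/-- Every aperiodic C*-inclusion `A ⊆ B` has the generalised
intersection property: there is a closed two-sided ideal `N` (the hidden ideal) of `B`
such that a closed two-sided ideal `J` satisfies `J ∩ A = {0}` iff `J ⊆ N`; moreover `N`
is the largest ideal of `B` that is aperiodic as an `A`-bimodule, i.e. `J ⊆ N` iff every
`x ∈ J` satisfies Kishimoto's condition. -/
theorem aperiodic_inclusion_generalised_intersection_property
    {B : Type*} [NonUnitalCStarAlgebra B] [PartialOrder B] [StarOrderedRing B]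
    (A : Set B) (hA : IsCStarSubalgebra A) (hA0 : ∃ x ∈ A, x ≠ 0)
    (hap : IsAperiodicInclusion A) :
    ∃ N : Set B, IsClosedTwoSidedIdeal N ∧
      (∀ J : Set B, IsClosedTwoSidedIdeal J → (J ∩ A = {0} ↔ J ⊆ N)) ∧
      (∀ J : Set B, IsClosedTwoSidedIdeal J →
        (J ⊆ N ↔ ∀ x ∈ J, ∀ D : Set B, IsHereditarySubalgebraIn A D → ∀ ε : ℝ, 0 < ε →
          ∃ a ∈ D, 0 ≤ a ∧ ‖a‖ = 1 ∧ ‖a * x * a‖ < ε)) := by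
  let K : Set B := {x | KishimotoCondition A x}
  have hKcl : IsClosed K := isClosed_setOf_kishimotoCondition A
  have hK0 : (0 : B) ∈ K := by
    have hzero : IsClosedTwoSidedIdeal ({0} : Set B) := by
      simp [IsClosedTwoSidedIdeal]
    refine (hap.inter_eq_zero_iff hA hA0 hzero).1 ?_ 0 rfl
    exact Set.inter_eq_left.2 (Set.singleton_subset_iff.2 hA.2.1)
  let N : Set B := {x | x ∈ K ∧ (∀ b, b * x ∈ K) ∧ (∀ c, x * c ∈ K) ∧ ∀ b c, b * x * c ∈ K}
  have hN : IsClosedTwoSidedIdeal N := by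
    refine ⟨?_, ?_, ?_, ?_, ?_, ?_⟩
    · have hN' : N = K ∩ ((⋂ b, (fun x => b * x) ⁻¹' K) ∩ ((⋂ c, (fun x => x * c) ⁻¹' K) ∩
          ⋂ b, ⋂ c, (fun x => b * x * c) ⁻¹' K)) := by
        ext x
        simp only [N, Set.mem_inter_iff, Set.mem_iInter, Set.mem_preimage, Set.mem_ofPred_eq]
      rw [hN']
      exact hKcl.inter ((isClosed_iInter fun b => hKcl.preimage (by fun_prop)).inter
        ((isClosed_iInter fun c => hKcl.preimage (by fun_prop)).inter
          (isClosed_iInter fun b => isClosed_iInter fun c => hKcl.preimage (by fun_prop))))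
    · simpa [N] using hK0
    · rintro x ⟨hx, hxl, hxr, hxlr⟩ y ⟨hy, hyl, hyr, hylr⟩
      refine ⟨hx.add hy, fun b => ?_, fun c => ?_, fun b c => ?_⟩
      · rw [mul_add]; exact (hxl b).add (hyl b)
      · rw [add_mul]; exact (hxr c).add (hyr c)
      · rw [mul_add, add_mul]; exact (hxlr b c).add (hylr b c)
    · rintro x ⟨hx, hxl, hxr, hxlr⟩
      refine ⟨hx.neg, fun b => ?_, fun c => ?_, fun b c => ?_⟩
      · rw [mul_neg]; exact (hxl b).neg
      · rw [neg_mul]; exact (hxr c).neg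
      · rw [mul_neg, neg_mul]; exact (hxlr b c).neg
    · rintro d x ⟨hx, hxl, hxr, hxlr⟩
      refine ⟨hxl d, fun b => ?_, hxlr d, fun b c => ?_⟩
      · rw [← mul_assoc]; exact hxl _
      · rw [← mul_assoc]; exact hxlr _ c
    · rintro d x ⟨hx, hxl, hxr, hxlr⟩
      refine ⟨hxr d, fun b => ?_, fun c => ?_, fun b c => ?_⟩
      · rw [← mul_assoc]; exact hxlr b d
      · rw [mul_assoc]; exact hxr _
      · rw [← mul_assoc, mul_assoc]; exact hxlr b _
  have hsub : ∀ J : Set B, IsClosedTwoSidedIdeal J →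
      (J ⊆ N ↔ ∀ x ∈ J, KishimotoCondition A x) := by
    rintro J ⟨-, -, -, -, hl, hr⟩
    exact ⟨fun h x hx => (h hx).1, fun h x hx => ⟨h x hx, fun b => h _ (hl b x hx),
      fun c => h _ (hr c x hx), fun b c => h _ (hr c _ (hl b x hx))⟩⟩
  exact ⟨N, hN, fun J hJ => (hap.inter_eq_zero_iff hA hA0 hJ).trans (hsub J hJ).symm, hsub⟩
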